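/- Let X be an L-algebra on the totally ordered set L_n = {x_0 > x_1 > … > x_{n−1}} whose natural order coincides with this total order (so the logical unit is x_0), and let p be the smallest invariant element of X. Extend L_n to the chain L_{n+1} = {x_0 > … > x_{n−1} > x_n} by adding a new least element x_n, and let c ∈ L_{n+1} be any element with p·x_{n−1} > c. Then there exists a unique L-algebra structure on L_{n+1} whose natural order is the total order of L_{n+1}, which restricts to the operation of X on L_n, and which satisfies p·x_n = c. -/

import Mathlib

/-- The L-algebra axioms for a binary operation `op` with logical unit `e`. -/
def IsLAlgebra {X : Type*} (op : X → X → X) (e : X) : Prop :=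
  (∀ x, op e x = x) ∧ (∀ x, op x e = e) ∧ (∀ x, op x x = e) ∧
  (∀ x y z, op (op x y) (op x z) = op (op y x) (op y z)) ∧
  (∀ x y, op x y = e → op y x = e → x = y)

/-!
In a linear L-algebra the cycloid equation reads `(x·y)·(x·z) = y·z` for `y ≤ x`. Hence an
extension by a new least element `⊥` is determined by its *bottom column* `F x = x·⊥`, subject to
`F y = (x·y)·F x` for `y ≤ x`.

If `p` is invariant and `p < x`, this says `p·F x = F p`, and `F x` cannot be an old element `b`
because `F p < p·b`; so `F x = ⊥`. For `y ≤ p` it says `F y = (p·y)·c`, which settles the case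
`c ≠ ⊥` and gives the formula that proves existence. If `c = ⊥`, the greatest `y` with `F y ≠ ⊥`
would satisfy `F (x·y) = F y`, hence `x·y ≤ y`, for every `x > y`. Finiteness gives `y ≤ x·y`, so
`y` would be an invariant element below `p`.
-/

open OrderDual (toDual ofDual)

namespace IsLAlgebra

variable {X : Type*} {op : X → X → X} {e : X}

theorem unit_op (h : IsLAlgebra op e) (x : X) : op e x = x := h.1 x

theorem op_unit (h : IsLAlgebra op e) (x : X) : op x e = e := h.2.1 x

theorem op_self (h : IsLAlgebra op e) (x : X) : op x x = e := h.2.2.1 x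

theorem cycloid (h : IsLAlgebra op e) (x y z : X) :
    op (op x y) (op x z) = op (op y x) (op y z) :=
  h.2.2.2.1 x y z

end IsLAlgebra

/-- A linear L-algebra: an L-algebra on a chain whose natural order is the order of the chain. -/
structure IsLinearLAlgebra {X : Type*} [LinearOrder X] (op : X → X → X) (e : X) : Prop where
  isLAlgebra : IsLAlgebra op e
  op_eq_unit_iff : ∀ a b, op a b = e ↔ a ≤ b

theorem isLinearLAlgebra_iff {X : Type*} [LinearOrder X] {op : X → X → X} {e : X} :
    IsLinearLAlgebra op e ↔ IsLAlgebra op e ∧ ∀ a b, op a b = e ↔ a ≤ b :=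
  ⟨fun h => ⟨h.1, h.2⟩, fun h => ⟨h.1, h.2⟩⟩

/-- An element `q` is invariant if `y·q = q` for all `y > q`. -/
def IsInvariantElement {X : Type*} [LT X] (op : X → X → X) (q : X) : Prop :=
  ∀ y, q < y → op y q = q

namespace IsLinearLAlgebra

variable {X : Type*} [LinearOrder X] {op : X → X → X} {e : X}

theorem le_unit (h : IsLinearLAlgebra op e) (a : X) : a ≤ e :=
  (h.op_eq_unit_iff a e).1 (h.isLAlgebra.op_unit a)

theorem cycloid_of_le (h : IsLinearLAlgebra op e) {x y : X} (hyx : y ≤ x) (z : X) :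
    op (op x y) (op x z) = op y z := by
  rw [h.isLAlgebra.cycloid, (h.op_eq_unit_iff y x).2 hyx, h.isLAlgebra.unit_op]

theorem monotone_op (h : IsLinearLAlgebra op e) (a : X) : Monotone (op a) := by
  intro b b' hbb'
  rw [← h.op_eq_unit_iff, h.isLAlgebra.cycloid, (h.op_eq_unit_iff b b').2 hbb',
    h.isLAlgebra.op_unit]

theorem strictMonoOn_op (h : IsLinearLAlgebra op e) (a : X) :
    StrictMonoOn (op a) (Set.Iic a) := by
  intro b _ b' hb'a hbb'
  contrapose! hbb'
  rwa [← h.op_eq_unit_iff, h.cycloid_of_le hb'a, h.op_eq_unit_iff] at hbb'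

theorem op_lt_op (h : IsLinearLAlgebra op e) {a b b' : X} (hba : b < a) (hbb' : b < b') :
    op a b < op a b' :=
  calc op a b < op a (min a b') :=
        h.strictMonoOn_op a hba.le (min_le_left a b') (lt_min hba hbb')
    _ ≤ op a b' := h.monotone_op a (min_le_right a b')

/-- Linear L-algebras on a well-ordered chain are KL-algebras. -/
theorem le_op [WellFoundedLT X] (h : IsLinearLAlgebra op e) (a b : X) : b ≤ op a b := by
  rcases le_or_gt a b with hab | hba
  · rw [(h.op_eq_unit_iff a b).2 hab]
    exact h.le_unit b
  · induction b using WellFoundedLT.induction with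
    | ind b ih =>
      by_contra! hlt
      exact (ih (op a b) hlt (hlt.trans hba)).not_gt (h.op_lt_op (hlt.trans hba) hlt)

theorem op_eq_right_of_isInvariantElement (h : IsLinearLAlgebra op e) {p x y : X}
    (hp : IsInvariantElement op p) (hpx : p < x) (hyp : y ≤ p) : op x y = y := by
  have hxyp : op x y ≤ p := hp x hpx ▸ h.monotone_op x hyp
  have hop : op p (op x y) = op p y := by
    simpa only [hp x hpx] using h.cycloid_of_le hpx.le y
  exact (h.strictMonoOn_op p).injOn hxyp hyp hop

end IsLinearLAlgebra

section Extension

variable {X : Type*}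

/-- The operation on `X` with a new element `⊥` adjoined that extends `op`, has `⊥·x = e`, and
whose products `a·⊥` are prescribed by `F`. -/
def extendBot (op : X → X → X) (e : X) (F : X → WithBot X) : WithBot X → WithBot X → WithBot X
  | ⊥, _ => e
  | (a : X), ⊥ => F a
  | (a : X), (b : X) => op a b

variable {op : X → X → X} {e : X} {F : X → WithBot X}

@[simp]
theorem extendBot_bot (x : WithBot X) : extendBot op e F ⊥ x = e := rfl

@[simp]
theorem extendBot_coe_bot (a : X) : extendBot op e F a ⊥ = F a := rfl

@[simp]
theorem extendBot_coe_coe (a b : X) : extendBot op e F a b = op a b := rfl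

theorem extendBot_unit (h : IsLAlgebra op e) (hF : F e = ⊥) (x : WithBot X) :
    extendBot op e F e x = x := by
  induction x with
  | bot => exact hF
  | coe x => simp [h.unit_op]

variable [LinearOrder X]

/-- The conditions on a family of products `F a = a·⊥` under which `extendBot op e F` is a linear
L-algebra. -/
structure IsBottomColumn (op : X → X → X) (e : X) (F : X → WithBot X) : Prop where
  unit : F e = ⊥
  lt_op : ∀ a b, F a < op a b
  cycloid : ∀ x y, y ≤ x → extendBot op e F (op x y) (F x) = F y

theorem extendBot_eq_unit_iff (h : IsLinearLAlgebra op e) (hF : IsBottomColumn op e F)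
    (a b : WithBot X) : extendBot op e F a b = e ↔ a ≤ b := by
  induction a with
  | bot => simp
  | coe a =>
    induction b with
    | bot => simpa [h.isLAlgebra.op_self a] using (hF.lt_op a a).ne
    | coe b => simp [h.op_eq_unit_iff]

theorem extendBot_cycloid_of_le (h : IsLinearLAlgebra op e) (hF : IsBottomColumn op e F)
    {x y : WithBot X} (hyx : y ≤ x) (z : WithBot X) :
    extendBot op e F (extendBot op e F x y) (extendBot op e F x z) = extendBot op e F y z := by
  induction x with
  | bot => simp [le_bot_iff.1 hyx, h.isLAlgebra.op_self]
  | coe x =>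
    induction y with
    | bot =>
      rw [extendBot_bot, extendBot_eq_unit_iff h hF]
      induction z with
      | bot => exact le_rfl
      | coe z => exact (hF.lt_op x z).le
    | coe y =>
      have hyx' : y ≤ x := WithBot.coe_le_coe.1 hyx
      induction z with
      | bot => exact hF.cycloid x y hyx'
      | coe z => simp [h.cycloid_of_le hyx']

theorem IsBottomColumn.isLinearLAlgebra_extendBot (h : IsLinearLAlgebra op e)
    (hF : IsBottomColumn op e F) : IsLinearLAlgebra (extendBot op e F) e := by
  have hle := extendBot_eq_unit_iff h hF
  have hunit := extendBot_unit h.isLAlgebra hF.unit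
  have hcycloid {x y : WithBot X} (hyx : y ≤ x) (z : WithBot X) :
      extendBot op e F (extendBot op e F x y) (extendBot op e F x z) =
        extendBot op e F (extendBot op e F y x) (extendBot op e F y z) := by
    rw [extendBot_cycloid_of_le h hF hyx, (hle y x).2 hyx, hunit]
  refine ⟨⟨hunit, fun x => (hle x e).2 ?_, fun x => (hle x x).2 le_rfl, fun x y z => ?_,
    fun x y hxy hyx => le_antisymm ((hle x y).1 hxy) ((hle y x).1 hyx)⟩, hle⟩
  · induction x with
    | bot => exact bot_le
    | coe x => exact WithBot.coe_le_coe.2 (h.le_unit x)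
  · rcases le_total y x with hyx | hxy
    · exact hcycloid hyx z
    · exact (hcycloid hxy z).symm

theorem IsLinearLAlgebra.isBottomColumn (h : IsLinearLAlgebra (extendBot op e F) e) :
    IsBottomColumn op e F where
  unit := h.isLAlgebra.unit_op ⊥
  lt_op a b := h.op_lt_op (WithBot.bot_lt_coe a) (WithBot.bot_lt_coe b)
  cycloid _ _ hyx := h.cycloid_of_le (WithBot.coe_le_coe.2 hyx) ⊥

theorem IsLinearLAlgebra.eq_extendBot {op' : WithBot X → WithBot X → WithBot X}
    (h : IsLinearLAlgebra op' e) (hres : ∀ a b : X, op' a b = op a b) :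
    op' = extendBot op e (fun a => op' a ⊥) := by
  funext a b
  induction a with
  | bot => exact (h.op_eq_unit_iff ⊥ b).2 bot_le
  | coe a =>
    induction b with
    | bot => rfl
    | coe b => exact hres a b

end Extension

namespace IsBottomColumn

variable {X : Type*} [LinearOrder X] {op : X → X → X} {e p : X} {F G : X → WithBot X}

theorem eq_bot_of_lt_invariant (hF : IsBottomColumn op e F) (hp : IsInvariantElement op p) {x : X}
    (hpx : p < x) : F x = ⊥ := by
  have hcycloid := hF.cycloid x p hpx.le
  rw [hp x hpx] at hcycloid
  cases hFx : F x with
  | bot => rfl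
  | coe b =>
    rw [hFx, extendBot_coe_coe] at hcycloid
    exact absurd hcycloid (hF.lt_op p b).ne'

theorem eq_bot_of_apply_eq_bot [WellFoundedGT X] (hF : IsBottomColumn op e F)
    (hKL : ∀ x y, y ≤ op x y) (hp : IsLeast {q | IsInvariantElement op q} p)
    (hFp : F p = ⊥) (y : X) : F y = ⊥ := by
  induction y using WellFoundedGT.induction with
  | ind y ih =>
    by_contra hFy
    have hinv : IsInvariantElement op y := by
      intro x hyx
      have hcycloid := hF.cycloid x y hyx.le
      rw [ih x hyx, extendBot_coe_bot] at hcycloid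
      have hle : op x y ≤ y := by
        by_contra! hlt
        exact hFy (hcycloid.symm.trans (ih _ hlt))
      exact hle.antisymm (hKL x y)
    rcases (hp.2 hinv).eq_or_lt with rfl | hpy
    · exact hFy hFp
    · exact hFy (hF.eq_bot_of_lt_invariant hp.1 hpy)

theorem eq_of_apply_eq [WellFoundedGT X] (hKL : ∀ x y, y ≤ op x y)
    (hp : IsLeast {q | IsInvariantElement op q} p) (hF : IsBottomColumn op e F)
    (hG : IsBottomColumn op e G) (hFG : F p = G p) : F = G := by
  funext y
  rcases lt_or_ge p y with hpy | hyp
  · rw [hF.eq_bot_of_lt_invariant hp.1 hpy, hG.eq_bot_of_lt_invariant hp.1 hpy]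
  · cases hGp : G p with
    | bot =>
      rw [hF.eq_bot_of_apply_eq_bot hKL hp (hFG.trans hGp),
        hG.eq_bot_of_apply_eq_bot hKL hp hGp]
    | coe c =>
      rw [← hF.cycloid p y hyp, ← hG.cycloid p y hyp, hFG, hGp, extendBot_coe_coe,
        extendBot_coe_coe]

end IsBottomColumn

section Existence

variable {X : Type*} [LinearOrder X] {op : X → X → X} {e p : X}

/-- The bottom column with value `c` at the invariant element `p`: it is `⊥` above `p`, and at
`y ≤ p` it is `(p·y)·c` if `c ∈ X` and `⊥` if `c = ⊥`. -/
def bottomColumn (op : X → X → X) (p : X) (c : WithBot X) (y : X) : WithBot X :=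
  if p < y then ⊥ else c.map (op (op p y))

theorem bottomColumn_of_lt (c : WithBot X) {y : X} (hpy : p < y) : bottomColumn op p c y = ⊥ :=
  if_pos hpy

theorem bottomColumn_of_le (c : WithBot X) {y : X} (hyp : y ≤ p) :
    bottomColumn op p c y = c.map (op (op p y)) :=
  if_neg hyp.not_gt

@[simp]
theorem bottomColumn_bot (y : X) : bottomColumn op p ⊥ y = ⊥ := by
  simp [bottomColumn]

theorem bottomColumn_self (h : IsLAlgebra op e) (c : WithBot X) : bottomColumn op p c p = c := by
  rw [bottomColumn_of_le c le_rfl, h.op_self, funext h.unit_op]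
  exact congrFun WithBot.map_id c

theorem bottomColumn_unit (h : IsLinearLAlgebra op e) {c : WithBot X} (hc : ∀ x, c < op p x) :
    bottomColumn op p c e = ⊥ := by
  rcases (h.le_unit p).eq_or_lt with rfl | hpe
  · rw [bottomColumn_self h.isLAlgebra]
    cases c with
    | bot => rfl
    | coe c => exact absurd (hc c) (by simp [h.isLAlgebra.unit_op])
  · exact bottomColumn_of_lt c hpe

theorem bottomColumn_lt_op (h : IsLinearLAlgebra op e) {c : WithBot X} (hc : ∀ x, c < op p x)
    (a b : X) : bottomColumn op p c a < op a b := by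
  rcases lt_or_ge p a with hpa | hap
  · exact bottomColumn_of_lt c hpa ▸ WithBot.bot_lt_coe _
  · cases c with
    | bot => simp
    | coe c =>
      have hc' (x : X) : c < op p x := WithBot.coe_lt_coe.1 (hc x)
      rw [bottomColumn_of_le _ hap, WithBot.map_coe, WithBot.coe_lt_coe, ← h.cycloid_of_le hap b]
      exact h.op_lt_op (hc' a) (hc' b)

theorem bottomColumn_op_of_lt (h : IsLinearLAlgebra op e) (hp : IsInvariantElement op p)
    (c : WithBot X) {x : X} (hpx : p < x) (y : X) :
    bottomColumn op p c (op x y) = bottomColumn op p c y := by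
  rcases lt_or_ge p y with hpy | hyp
  · have hlt : p < op x y := by simpa only [hp x hpx] using h.op_lt_op hpx hpy
    rw [bottomColumn_of_lt c hlt, bottomColumn_of_lt c hpy]
  · rw [h.op_eq_right_of_isInvariantElement hp hpx hyp]

theorem bottomColumn_cycloid (h : IsLinearLAlgebra op e) (hp : IsInvariantElement op p)
    (c : WithBot X) {x y : X} (hyx : y ≤ x) :
    extendBot op e (bottomColumn op p c) (op x y) (bottomColumn op p c x) =
      bottomColumn op p c y := by
  rcases lt_or_ge p x with hpx | hxp
  · rw [bottomColumn_of_lt c hpx, extendBot_coe_bot, bottomColumn_op_of_lt h hp c hpx]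
  · cases c with
    | bot => simp
    | coe c =>
      have hop : op (op x y) (op (op p x) c) = op (op p y) c := by
        rw [← h.cycloid_of_le hxp y, h.cycloid_of_le (h.monotone_op p hyx)]
      rw [bottomColumn_of_le _ hxp, bottomColumn_of_le _ (hyx.trans hxp), WithBot.map_coe,
        WithBot.map_coe, extendBot_coe_coe, hop]

theorem isBottomColumn_bottomColumn (h : IsLinearLAlgebra op e) (hp : IsInvariantElement op p)
    {c : WithBot X} (hc : ∀ x, c < op p x) : IsBottomColumn op e (bottomColumn op p c) where
  unit := bottomColumn_unit h hc
  lt_op := bottomColumn_lt_op h hc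
  cycloid _ _ := bottomColumn_cycloid h hp c

end Existence

section Transport

variable {X Y : Type*}

/-- The transport of a binary operation along a bijection. -/
def transportOp (f : X ≃ Y) : (X → X → X) ≃ (Y → Y → Y) :=
  f.arrowCongr (f.arrowCongr f)

@[simp]
theorem transportOp_apply_apply (f : X ≃ Y) (op : X → X → X) (a b : X) :
    transportOp f op (f a) (f b) = f (op a b) := by
  simp [transportOp]

theorem isLAlgebra_transportOp_iff (f : X ≃ Y) {op : X → X → X} {e : X} :
    IsLAlgebra (transportOp f op) (f e) ↔ IsLAlgebra op e := by
  simp [IsLAlgebra, f.surjective.forall]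

variable [LinearOrder X] [LinearOrder Y]

theorem isLinearLAlgebra_transportOp_iff (f : X ≃o Y) {op : X → X → X} {e : X} :
    IsLinearLAlgebra (transportOp f.toEquiv op) (f e) ↔ IsLinearLAlgebra op e := by
  have happly (a b : X) : transportOp f.toEquiv op (f a) (f b) = f (op a b) :=
    transportOp_apply_apply f.toEquiv op a b
  have hL : IsLAlgebra (transportOp f.toEquiv op) (f e) ↔ IsLAlgebra op e :=
    isLAlgebra_transportOp_iff f.toEquiv
  simp only [isLinearLAlgebra_iff, hL, f.surjective.forall, happly, f.injective.eq_iff,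
    f.le_iff_le]

theorem existsUnique_extension_iff (f : WithBot X ≃o Y) {op : X → X → X} {e p : X}
    {c : WithBot X} :
    (∃! op' : WithBot X → WithBot X → WithBot X,
      IsLinearLAlgebra op' e ∧ (∀ a b : X, op' a b = op a b) ∧ op' p ⊥ = c) ↔
    ∃! op' : Y → Y → Y,
      IsLinearLAlgebra op' (f e) ∧ (∀ a b : X, op' (f a) (f b) = f (op a b)) ∧
        op' (f p) (f ⊥) = f c := by
  refine (transportOp f.toEquiv).existsUnique_congr fun op' => ?_
  have happly (a b : WithBot X) : transportOp f.toEquiv op' (f a) (f b) = f (op' a b) :=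
    transportOp_apply_apply f.toEquiv op' a b
  simp only [isLinearLAlgebra_transportOp_iff, happly, f.injective.eq_iff]

end Transport

/-- The chain `xₙ₋₁ < … < x₀` with a new least element is the chain `xₙ < … < x₀`; the order on
indices is the dual of the order on the chain. -/
def withBotFinDualOrderIso (n : ℕ) : WithBot (Fin n)ᵒᵈ ≃o (Fin (n + 1))ᵒᵈ where
  toFun := WithBot.recBotCoe (toDual (Fin.last n)) fun a => toDual (ofDual a).castSucc
  invFun i :=
    Fin.lastCases (motive := fun _ => WithBot (Fin n)ᵒᵈ) ⊥ (fun a => ↑(toDual a)) (ofDual i)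
  left_inv a := by
    cases a with
    | bot => exact Fin.lastCases_last
    | coe a => exact Fin.lastCases_castSucc _
  right_inv i := by
    induction i using Fin.lastCases with
    | last => exact congrArg _ Fin.lastCases_last
    | cast i => exact congrArg _ (Fin.lastCases_castSucc i)
  map_rel_iff' {a b} := by
    cases a with
    | bot => exact iff_of_true (Fin.le_last _) bot_le
    | coe a =>
      cases b with
      | bot => exact iff_of_false (Fin.castSucc_lt_last _).not_ge (WithBot.not_coe_le_bot _)
      | coe b => exact (WithBot.coe_le_coe (a := a) (b := b)).symm

theorem linear_L_algebra_unique_extension_general {X : Type*} [LinearOrder X] [WellFoundedGT X]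
    {op : X → X → X} {e p : X} (h : IsLinearLAlgebra op e) (hKL : ∀ x y, y ≤ op x y)
    (hp : IsLeast {q | IsInvariantElement op q} p) {c : WithBot X} (hc : ∀ x, c < op p x) :
    ∃! op' : WithBot X → WithBot X → WithBot X,
      IsLinearLAlgebra op' e ∧ (∀ a b : X, op' a b = op a b) ∧ op' p ⊥ = c := by
  have hcol := isBottomColumn_bottomColumn h hp.1 hc
  refine ⟨extendBot op e (bottomColumn op p c), ⟨hcol.isLinearLAlgebra_extendBot h,
    extendBot_coe_coe, bottomColumn_self h.isLAlgebra c⟩, ?_⟩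
  rintro op' ⟨h', hres, hval⟩
  have heq := h'.eq_extendBot hres
  have hcol' : IsBottomColumn op e (fun a => op' a ⊥) := (heq ▸ h').isBottomColumn
  rw [heq, hcol'.eq_of_apply_eq hKL hp hcol (hval.trans (bottomColumn_self h.isLAlgebra c).symm)]

/-- The chain `Lₙ = {x₀ > x₁ > … }` is modelled by `Fin (n+1)`, where index `i`
stands for `xᵢ`; thus `xᵢ ≤ xⱼ` iff `j ≤ i`, the logical unit is `x₀ = 0`, and the
natural order condition reads `op a b = 0 ↔ b.val ≤ a.val`.

Given an L-algebra `op` on the chain `Fin (n+1)` whose natural order is this total order,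
with smallest invariant element `p` (i.e. `p` is invariant and every invariant element `q`
satisfies `q ≥ p`, that is `q.val ≤ p.val`), and any `c` in the extended chain `Fin (n+2)`
with `p·xₙ > c` (i.e. `(op p (Fin.last n)).val < c.val`), there is a unique L-algebra
structure on the chain `Fin (n+2)` (with the new least element `Fin.last (n+1)`) whose
natural order is the total order of the chain, which restricts to `op` on `Fin (n+1)`,
and which satisfies `p·x_{n+1} = c`. -/
theorem linear_L_algebra_unique_extension (n : ℕ)
    (op : Fin (n + 1) → Fin (n + 1) → Fin (n + 1))
    (hL : IsLAlgebra op 0)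
    (horder : ∀ a b : Fin (n + 1), op a b = 0 ↔ b.val ≤ a.val)
    (p : Fin (n + 1))
    (hp : ∀ y : Fin (n + 1), y.val < p.val → op y p = p)
    (hmin : ∀ q : Fin (n + 1), (∀ y : Fin (n + 1), y.val < q.val → op y q = q) →
      q.val ≤ p.val)
    (c : Fin (n + 2)) (hc : (op p (Fin.last n)).val < c.val) :
    ∃! op' : Fin (n + 2) → Fin (n + 2) → Fin (n + 2),
      IsLAlgebra op' 0 ∧
      (∀ a b : Fin (n + 2), op' a b = 0 ↔ b.val ≤ a.val) ∧
      (∀ a b : Fin (n + 1), op' a.castSucc b.castSucc = (op a b).castSucc) ∧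
      op' p.castSucc (Fin.last (n + 1)) = c := by
  let f := withBotFinDualOrderIso (n + 1)
  obtain ⟨c, rfl⟩ := f.surjective c
  have h : IsLinearLAlgebra (X := (Fin (n + 1))ᵒᵈ) op 0 := ⟨hL, horder⟩
  have hlast : c < ↑(toDual (op p (Fin.last n))) := f.lt_iff_lt.1 hc
  have hc' (x : Fin (n + 1)) : c < ↑(toDual (op p x)) :=
    hlast.trans_le (WithBot.coe_le_coe.2 (h.monotone_op p (Fin.le_last x)))
  have hext := (existsUnique_extension_iff f).1
    (linear_L_algebra_unique_extension_general h h.le_op ⟨hp, hmin⟩ hc')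
  simp only [isLinearLAlgebra_iff, and_assoc] at hext
  exact hext
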